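/- arXiv:1306.1581 — 5 statements merged into one kernel-verified Lean document; each statement's English description precedes it below -/
import Mathlib

section
/- Let n ≥ 2 and let κ, μ ∈ ℝⁿ both lie in the Gårding cone Γ₂. Then the polarized second symmetric function satisfies the Gårding inequality σ_{1,1}(κ, μ) ≥ √(σ₂(κ) · σ₂(μ)). -/
open Finset

/-- First elementary symmetric polynomial: σ₁(κ) = ∑ i, κ i. -/
noncomputable def sigma1 {n : ℕ} (κ : Fin n → ℝ) : ℝ := ∑ i, κ i

/-- Second elementary symmetric polynomial: σ₂(κ) = ∑_{i<j} κ i * κ j. -/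
noncomputable def sigma2 {n : ℕ} (κ : Fin n → ℝ) : ℝ :=
  ∑ p ∈ Finset.univ.filter (fun p : Fin n × Fin n => p.1 < p.2), κ p.1 * κ p.2

/-- Polarization of σ₂: σ_{1,1}(κ, μ) = (1/2)(σ₁(κ)σ₁(μ) − ∑ i, κ i * μ i). -/
noncomputable def sigma11 {n : ℕ} (κ μ : Fin n → ℝ) : ℝ :=
  (1 / 2) * (sigma1 κ * sigma1 μ - ∑ i, κ i * μ i)

lemma two_sigma2_aux {n : ℕ} (κ : Fin n → ℝ) :
    2 * sigma2 κ = sigma1 κ ^ 2 - ∑ i, κ i ^ 2 := by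
  have h1 : sigma2 κ = ∑ i, ∑ j, if i < j then κ i * κ j else 0 := by
    unfold sigma2
    rw [Finset.sum_filter, Fintype.sum_prod_type]
  have h2 : sigma2 κ = ∑ i, ∑ j, if j < i then κ i * κ j else 0 := by
    rw [h1, Finset.sum_comm]
    refine Finset.sum_congr rfl fun i _ => Finset.sum_congr rfl fun j _ => ?_
    rw [mul_comm]
  have h3 : ∑ i, κ i ^ 2 = ∑ i, ∑ j, if i = j then κ i * κ j else 0 := by
    refine Finset.sum_congr rfl fun i _ => ?_
    simp [sq]
  have h4 : sigma1 κ ^ 2 = ∑ i, ∑ j, κ i * κ j := by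
    unfold sigma1
    rw [sq, Finset.sum_mul_sum]
  have h5 : sigma1 κ ^ 2 = sigma2 κ + sigma2 κ + ∑ i, κ i ^ 2 := by
    nth_rewrite 1 [h1]
    rw [h2, h3, h4, ← Finset.sum_add_distrib, ← Finset.sum_add_distrib]
    refine Finset.sum_congr rfl fun i _ => ?_
    rw [← Finset.sum_add_distrib, ← Finset.sum_add_distrib]
    refine Finset.sum_congr rfl fun j _ => ?_
    rcases lt_trichotomy i j with h | h | h
    · simp [h, h.ne, h.not_gt]
    · simp [h]
    · simp [h, h.ne', h.not_gt]
  linarith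

/-- Gårding's inequality: for κ, μ in the Gårding cone Γ₂,
    σ_{1,1}(κ, μ) ≥ √(σ₂(κ)·σ₂(μ)). -/
theorem garding_inequality {n : ℕ} (hn : 2 ≤ n) (κ μ : Fin n → ℝ)
    (hκ1 : sigma1 κ > 0) (hκ2 : sigma2 κ > 0)
    (hμ1 : sigma1 μ > 0) (hμ2 : sigma2 μ > 0) :
    sigma11 κ μ ≥ Real.sqrt (sigma2 κ * sigma2 μ) := by
  have hk := two_sigma2_aux κ
  have hm := two_sigma2_aux μ
  have hA : 0 ≤ ∑ i, κ i ^ 2 := Finset.sum_nonneg fun i _ => sq_nonneg _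
  have hB : 0 ≤ ∑ i, μ i ^ 2 := Finset.sum_nonneg fun i _ => sq_nonneg _
  have hC := Real.sum_mul_le_sqrt_mul_sqrt Finset.univ κ μ
  have hp := Real.sq_sqrt hA
  have hq := Real.sq_sqrt hB
  have hp0 := Real.sqrt_nonneg (∑ i, κ i ^ 2)
  have hq0 := Real.sqrt_nonneg (∑ i, μ i ^ 2)
  unfold sigma11
  generalize Real.sqrt (∑ i, κ i ^ 2) = p at *
  generalize Real.sqrt (∑ i, μ i ^ 2) = q at *
  have hpa : p < sigma1 κ := lt_of_pow_lt_pow_left₀ 2 hκ1.le (by linarith)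
  have hqb : q < sigma1 μ := lt_of_pow_lt_pow_left₀ 2 hμ1.le (by linarith)
  have hpq : p * q ≤ sigma1 κ * sigma1 μ := mul_le_mul hpa.le hqb.le hq0 hκ1.le
  have e1 : sigma2 κ = (sigma1 κ ^ 2 - p ^ 2) / 2 := by linarith
  have e2 : sigma2 μ = (sigma1 μ ^ 2 - q ^ 2) / 2 := by linarith
  have key : Real.sqrt (sigma2 κ * sigma2 μ) ≤ (1 / 2) * (sigma1 κ * sigma1 μ - p * q) := by
    apply Real.sqrt_le_iff.mpr
    refine ⟨by linarith, ?_⟩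
    rw [e1, e2]
    nlinarith [sq_nonneg (sigma1 κ * q - sigma1 μ * p)]
  linarith
end

section
/- Let n ≥ 2 and let κ, μ ∈ ℝⁿ both lie in the Gårding cone Γ₂. If equality holds in the Gårding inequality, i.e. σ_{1,1}(κ, μ) = √(σ₂(κ) · σ₂(μ)), then there exists a constant c > 0 such that μ = c·κ (componentwise). -/
open Finset

theorem sigma1_sq_eq {n : ℕ} (κ : Fin n → ℝ) :
    sigma1 κ ^ 2 = ∑ i, κ i * κ i + 2 * sigma2 κ := by
  have h1 : sigma1 κ ^ 2 = ∑ p : Fin n × Fin n, κ p.1 * κ p.2 := by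
    rw [sq, sigma1, Finset.sum_mul_sum, Fintype.sum_prod_type]
  have hs : ∑ p : Fin n × Fin n, (if p.2 < p.1 then κ p.1 * κ p.2 else 0) =
      ∑ p : Fin n × Fin n, (if p.1 < p.2 then κ p.1 * κ p.2 else 0) := by
    apply Fintype.sum_equiv (Equiv.prodComm (Fin n) (Fin n))
    intro p
    simp [mul_comm]
  have hd : ∑ p : Fin n × Fin n, (if p.1 = p.2 then κ p.1 * κ p.2 else 0) =
      ∑ i, κ i * κ i := by
    rw [Fintype.sum_prod_type]
    simp
  have h2 : sigma2 κ = ∑ p : Fin n × Fin n, (if p.1 < p.2 then κ p.1 * κ p.2 else 0) := by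
    rw [sigma2, Finset.sum_filter]
  rw [h1, ← hd, two_mul]
  nth_rewrite 1 [h2]
  rw [h2, ← hs]
  nth_rewrite 1 [hs]
  rw [← Finset.sum_add_distrib, ← Finset.sum_add_distrib]
  apply Finset.sum_congr rfl
  intro p _
  rcases lt_trichotomy p.1 p.2 with h | h | h
  · simp [h, h.ne, h.not_gt]
  · simp [h]
  · simp [h, h.ne', h.not_gt]

/-- Equality case in Gårding's inequality: if κ, μ ∈ Γ₂ and
    σ_{1,1}(κ, μ) = √(σ₂(κ)·σ₂(μ)), then μ = c·κ for some c > 0. -/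
theorem garding_equality_case {n : ℕ} (hn : 2 ≤ n) (κ μ : Fin n → ℝ)
    (hκ1 : sigma1 κ > 0) (hκ2 : sigma2 κ > 0)
    (hμ1 : sigma1 μ > 0) (hμ2 : sigma2 μ > 0)
    (heq : sigma11 κ μ = Real.sqrt (sigma2 κ * sigma2 μ)) :
    ∃ c : ℝ, c > 0 ∧ ∀ i, μ i = c * κ i := by
  have hk := sigma1_sq_eq κ
  have hm := sigma1_sq_eq μ
  have hz : sigma11 κ μ ^ 2 = sigma2 κ * sigma2 μ := by
    rw [heq, Real.sq_sqrt (by positivity)]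
  have hD : ∑ i, κ i * μ i = sigma1 κ * sigma1 μ - 2 * sigma11 κ μ := by
    unfold sigma11; ring
  have hv : ∑ i, (sigma1 μ * κ i - sigma1 κ * μ i) ^ 2 =
      sigma1 μ ^ 2 * ∑ i, κ i * κ i - 2 * sigma1 κ * sigma1 μ * ∑ i, κ i * μ i
        + sigma1 κ ^ 2 * ∑ i, μ i * μ i := by
    rw [Finset.mul_sum, Finset.mul_sum, Finset.mul_sum, ← Finset.sum_sub_distrib,
      ← Finset.sum_add_distrib]
    apply Finset.sum_congr rfl
    intro i _
    ring
  generalize sigma11 κ μ = z at *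
  generalize sigma1 κ = a at *
  generalize sigma1 μ = b at *
  generalize sigma2 κ = x at *
  generalize sigma2 μ = y at *
  have hA : ∑ i, κ i * κ i = a ^ 2 - 2 * x := by linarith
  have hB : ∑ i, μ i * μ i = b ^ 2 - 2 * y := by linarith
  rw [hA, hB, hD] at hv
  have hx : x * ∑ i, (b * κ i - a * μ i) ^ 2 = -2 * (b * x - a * z) ^ 2 := by
    rw [hv]
    linear_combination 2 * a ^ 2 * hz
  have hle : ∑ i, (b * κ i - a * μ i) ^ 2 ≤ 0 := by
    by_contra hc
    push Not at hc
    have := mul_pos hκ2 hc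
    nlinarith [sq_nonneg (b * x - a * z)]
  have h0 : ∑ i, (b * κ i - a * μ i) ^ 2 = 0 :=
    le_antisymm hle (Finset.sum_nonneg fun i _ => sq_nonneg _)
  rw [Finset.sum_eq_zero_iff_of_nonneg (fun i _ => sq_nonneg _)] at h0
  refine ⟨b / a, div_pos hμ1 hκ1, fun i => ?_⟩
  have h := pow_eq_zero_iff (two_ne_zero) |>.1 (h0 i (Finset.mem_univ i))
  field_simp
  linarith
end

section
/- Let n ≥ 2 and let A, B be real symmetric n×n matrices with tr(A) > 0, tr(B) > 0, and σ₂(A) = σ₂(B) > 0. Then 2·σ₂(A) ≤ tr(A)·tr(B) − tr(A·B), i.e. σ₂(A) ≤ σ_{1,1}(A, B); moreover equality σ₂(A) = σ_{1,1}(A, B) holds if and only if A = B. -/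
open Matrix

/-- Second elementary symmetric function of the eigenvalues of a matrix:
    σ₂(A) = (1/2)((tr A)² − tr(A²)). -/
noncomputable def sigma2M {n : ℕ} (A : Matrix (Fin n) (Fin n) ℝ) : ℝ :=
  (1 / 2) * ((A.trace) ^ 2 - (A * A).trace)

/-- Polarization of σ₂ for matrices: σ_{1,1}(A, B) = (1/2)(tr A · tr B − tr(AB)). -/
noncomputable def sigma11M {n : ℕ} (A B : Matrix (Fin n) (Fin n) ℝ) : ℝ :=
  (1 / 2) * (A.trace * B.trace - (A * B).trace)

/-- For real symmetric matrices A, B with tr A > 0, tr B > 0 and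
    σ₂(A) = σ₂(B) > 0, one has σ₂(A) ≤ σ_{1,1}(A, B), i.e.
    2σ₂(A) ≤ tr A · tr B − tr(AB), with equality iff A = B. -/
theorem garding_matrix_lemma {n : ℕ} (hn : 2 ≤ n)
    (A B : Matrix (Fin n) (Fin n) ℝ) (hA : A.IsSymm) (hB : B.IsSymm)
    (htA : A.trace > 0) (htB : B.trace > 0)
    (hσ : sigma2M A = sigma2M B) (hσA : sigma2M A > 0) :
    2 * sigma2M A ≤ A.trace * B.trace - (A * B).trace ∧
      (sigma2M A = sigma11M A B ↔ A = B) := by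
  have hC0 : 0 ≤ ((B.trace • A - A.trace • B) * (B.trace • A - A.trace • B)).trace ∧
      (((B.trace • A - A.trace • B) * (B.trace • A - A.trace • B)).trace = 0 →
        B.trace • A - A.trace • B = 0) := by
    have hC : (B.trace • A - A.trace • B)ᵀ = B.trace • A - A.trace • B := by
      rw [transpose_sub, transpose_smul, transpose_smul, hA.eq, hB.eq]
    generalize B.trace • A - A.trace • B = C at hC
    have h : (C * C).trace = ∑ i, ∑ j, C i j ^ 2 := by
      simp only [trace, diag, mul_apply]
      refine Finset.sum_congr rfl fun i _ => Finset.sum_congr rfl fun j _ => ?_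
      have : C j i = C i j := congrFun (congrFun hC i) j
      rw [this]; ring
    rw [h]
    refine ⟨Finset.sum_nonneg fun i _ => Finset.sum_nonneg fun j _ => sq_nonneg _, fun h0 => ?_⟩
    ext i j
    have h1 := (Finset.sum_eq_zero_iff_of_nonneg
      (fun i _ => Finset.sum_nonneg fun j _ => sq_nonneg (C i j))).mp h0 i (Finset.mem_univ i)
    have h2 := (Finset.sum_eq_zero_iff_of_nonneg
      (fun j _ => sq_nonneg (C i j))).mp h1 j (Finset.mem_univ j)
    simpa using h2
  have hexp : ((B.trace • A - A.trace • B) * (B.trace • A - A.trace • B)).trace =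
      B.trace ^ 2 * (A * A).trace - 2 * (A.trace * B.trace) * (A * B).trace
        + A.trace ^ 2 * (B * B).trace := by
    simp only [sub_mul, mul_sub, trace_sub, smul_mul_assoc, mul_smul_comm, trace_smul, smul_eq_mul]
    rw [trace_mul_comm B A]; ring
  obtain ⟨hnn, hz⟩ := hC0
  rw [hexp] at hnn hz
  have hab : 0 < A.trace * B.trace := mul_pos htA htB
  have hP : (A * A).trace = A.trace ^ 2 - 2 * sigma2M A := by unfold sigma2M; ring
  have hQ : (B * B).trace = B.trace ^ 2 - 2 * sigma2M A := by rw [hσ]; unfold sigma2M; ring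
  rw [hP, hQ] at hnn hz
  have hsq := mul_nonneg hσA.le (sq_nonneg (A.trace - B.trace))
  refine ⟨?_, fun h => ?_, fun h => ?_⟩
  · refine le_of_mul_le_mul_left ?_ hab
    nlinarith
  · have hR : (A * B).trace = A.trace * B.trace - 2 * sigma2M A := by
      rw [h]; unfold sigma11M; ring
    rw [hR] at hnn hz
    have h0 : sigma2M A * (A.trace - B.trace) ^ 2 = 0 := by nlinarith
    have h1 : A.trace = B.trace := by
      rcases mul_eq_zero.mp h0 with h2 | h2
      · exact absurd h2 hσA.ne'
      · exact sub_eq_zero.mp (pow_eq_zero_iff (two_ne_zero) |>.mp h2)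
    have h3 := hz (by linear_combination (-2) * h0)
    rw [h1, ← smul_sub] at h3
    rcases smul_eq_zero.mp h3 with h4 | h4
    · exact absurd h4 htB.ne'
    · exact sub_eq_zero.mp h4
  · subst h
    unfold sigma2M sigma11M; ring
end

section
/- Let n ≥ 2 and let A, B be real symmetric n×n matrices with tr(A) > 0, tr(B) > 0, σ₂(A) > 0 and σ₂(B) > 0. Then σ_{1,1}(A, B) ≥ √(σ₂(A) · σ₂(B)), and equality holds if and only if B = c·A for some constant c > 0. -/
open Matrix

/-- Gårding's inequality for real symmetric matrices: if tr A > 0, tr B > 0,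
    σ₂(A) > 0 and σ₂(B) > 0, then σ_{1,1}(A, B) ≥ √(σ₂(A)·σ₂(B)), with
    equality iff B = c·A for some c > 0. -/
theorem garding_matrix_inequality {n : ℕ} (hn : 2 ≤ n)
    (A B : Matrix (Fin n) (Fin n) ℝ) (hA : A.IsSymm) (hB : B.IsSymm)
    (htA : A.trace > 0) (htB : B.trace > 0)
    (hσA : sigma2M A > 0) (hσB : sigma2M B > 0) :
    sigma11M A B ≥ Real.sqrt (sigma2M A * sigma2M B) ∧
      (sigma11M A B = Real.sqrt (sigma2M A * sigma2M B) ↔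
        ∃ c : ℝ, c > 0 ∧ B = c • A) := by
  set a := A.trace with ha
  set b := B.trace with hb
  set p := (A * A).trace with hp
  set q := (B * B).trace with hq
  set r := (A * B).trace with hr
  have e1 : sigma2M A = (1 / 2) * (a ^ 2 - p) := rfl
  have e2 : sigma2M B = (1 / 2) * (b ^ 2 - q) := rfl
  have e3 : sigma11M A B = (1 / 2) * (a * b - r) := rfl
  have hCs : (a • B - b • A)ᵀ = a • B - b • A := by
    rw [transpose_sub, transpose_smul, transpose_smul, hA.eq, hB.eq]
  have hD : ((a • B - b • A) * (a • B - b • A)).trace = a ^ 2 * q - 2 * a * b * r + b ^ 2 * p := by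
    have hc : (B * A).trace = r := Matrix.trace_mul_comm B A
    simp only [sub_mul, mul_sub, smul_mul_assoc, mul_smul_comm, trace_sub, trace_smul, smul_eq_mul,
      hc, ← hp, ← hq, ← hr]
    ring
  have hS : ((a • B - b • A) * (a • B - b • A)).trace = ∑ i, ∑ j, ((a • B - b • A) i j) ^ 2 := by
    nth_rewrite 2 [← hCs]
    simp only [Matrix.trace, Matrix.diag, Matrix.mul_apply, Matrix.transpose_apply, sq]
  have hD0 : 0 ≤ a ^ 2 * q - 2 * a * b * r + b ^ 2 * p := by
    rw [← hD, hS]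
    positivity
  have hpa : 0 < a ^ 2 - p := by linarith
  have hqb : 0 < b ^ 2 - q := by linarith
  have key : a ^ 2 * ((a * b - r) ^ 2 - (a ^ 2 - p) * (b ^ 2 - q)) =
      (a * r - b * p) ^ 2 + (a ^ 2 - p) * (a ^ 2 * q - 2 * a * b * r + b ^ 2 * p) := by ring
  have ha2 : 0 < a ^ 2 := by positivity
  have hge : 0 ≤ (a * b - r) ^ 2 - (a ^ 2 - p) * (b ^ 2 - q) := by
    refine nonneg_of_mul_nonneg_right ?_ ha2
    rw [key]
    positivity
  have hpos : 0 < a * b - r := by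
    have h1 : 0 < a ^ 2 * (b ^ 2 - q) := by positivity
    have h2 : 0 < b ^ 2 * (a ^ 2 - p) := by positivity
    have h3 : 0 < (2 * (a * b)) * (a * b - r) := by nlinarith
    have h4 : 0 < 2 * (a * b) := by positivity
    exact (pos_iff_pos_of_mul_pos h3).1 h4
  have hs : 0 ≤ sigma11M A B := by rw [e3]; linarith
  refine ⟨?_, ?_, ?_⟩
  · apply Real.sqrt_le_iff.2
    refine ⟨hs, ?_⟩
    rw [e1, e2, e3]
    nlinarith
  · intro h
    have h2 : sigma11M A B ^ 2 = sigma2M A * sigma2M B := by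
      rw [h, Real.sq_sqrt (by positivity)]
    rw [e1, e2, e3] at h2
    have h3 : (a * b - r) ^ 2 - (a ^ 2 - p) * (b ^ 2 - q) = 0 := by linarith
    rw [h3, mul_zero] at key
    have h4 : a ^ 2 * q - 2 * a * b * r + b ^ 2 * p = 0 := by
      have h5 : (a ^ 2 - p) * (a ^ 2 * q - 2 * a * b * r + b ^ 2 * p) = 0 := by
        have := mul_nonneg hpa.le hD0
        nlinarith [sq_nonneg (a * r - b * p)]
      exact (mul_eq_zero.1 h5).resolve_left hpa.ne'
    rw [← hD, hS, Finset.sum_eq_zero_iff_of_nonneg (fun i _ => by positivity)] at h4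
    refine ⟨b / a, by positivity, ?_⟩
    ext i j
    have h5 := h4 i (Finset.mem_univ i)
    rw [Finset.sum_eq_zero_iff_of_nonneg (fun i _ => by positivity)] at h5
    have h6 := pow_eq_zero_iff (two_ne_zero) |>.1 (h5 j (Finset.mem_univ j))
    simp only [Matrix.sub_apply, Matrix.smul_apply, smul_eq_mul] at h6 ⊢
    field_simp
    linarith
  · rintro ⟨c, hc, hBc⟩
    have hr' : r = c * p := by
      rw [hr, hp, hBc, mul_smul_comm, trace_smul, smul_eq_mul]
    have hq' : q = c ^ 2 * p := by
      rw [hq, hp, hBc, mul_smul_comm, smul_mul_assoc, trace_smul, trace_smul, smul_eq_mul, smul_eq_mul]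
      ring
    have hb' : b = c * a := by
      rw [hb, ha, hBc, trace_smul, smul_eq_mul]
    symm
    rw [Real.sqrt_eq_iff_mul_self_eq (by positivity) hs, e1, e2, e3, hr', hq', hb']
    ring
end

section
/- Let n ≥ 2. The function κ ↦ √(σ₂(κ)) is concave on the Gårding cone Γ₂ = {κ ∈ ℝⁿ : σ₁(κ) > 0 and σ₂(κ) > 0}: for all κ, μ ∈ Γ₂ and t ∈ [0,1], √(σ₂(tκ + (1−t)μ)) ≥ t√(σ₂(κ)) + (1−t)√(σ₂(μ)). -/
open Finset

theorem sigma2_aux {n : ℕ} (κ : Fin n → ℝ) :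
    (∑ i, κ i) ^ 2 = ∑ i, κ i * κ i + 2 * sigma2 κ := by
  have h1 : sigma2 κ = ∑ i, ∑ j, if i < j then κ i * κ j else 0 := by
    unfold sigma2
    rw [Finset.sum_filter, Fintype.sum_prod_type]
  have h2 : sigma2 κ = ∑ i, ∑ j, if j < i then κ i * κ j else 0 := by
    rw [h1, Finset.sum_comm]
    refine Finset.sum_congr rfl fun i _ => Finset.sum_congr rfl fun j _ => ?_
    rw [mul_comm]
  have h3 : ∑ i, κ i * κ i = ∑ i, ∑ j, if i = j then κ i * κ j else 0 := by
    simp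
  rw [two_mul]
  nth_rw 1 [h1]
  rw [h2, h3, sq, Finset.sum_mul_sum, ← Finset.sum_add_distrib, ← Finset.sum_add_distrib]
  refine Finset.sum_congr rfl fun i _ => ?_
  rw [← Finset.sum_add_distrib, ← Finset.sum_add_distrib]
  refine Finset.sum_congr rfl fun j _ => ?_
  rcases lt_trichotomy i j with h | h | h
  · simp [h, h.ne, h.not_gt]
  · simp [h]
  · simp [h, h.ne', h.not_gt]

/-- √σ₂ is concave on the Gårding cone Γ₂. -/
theorem sqrt_sigma2_concave {n : ℕ} (hn : 2 ≤ n) (κ μ : Fin n → ℝ)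
    (hκ1 : sigma1 κ > 0) (hκ2 : sigma2 κ > 0)
    (hμ1 : sigma1 μ > 0) (hμ2 : sigma2 μ > 0)
    (t : ℝ) (ht0 : 0 ≤ t) (ht1 : t ≤ 1) :
    Real.sqrt (sigma2 (t • κ + (1 - t) • μ)) ≥
      t * Real.sqrt (sigma2 κ) + (1 - t) * Real.sqrt (sigma2 μ) := by
  have eκ := sigma2_aux κ
  have eμ := sigma2_aux μ
  have em := sigma2_aux (t • κ + (1 - t) • μ)
  have cs := Finset.sum_mul_sq_le_sq_mul_sq Finset.univ κ μ
  simp only [sq (κ _), sq (μ _)] at cs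
  have s1 : ∑ i, (t • κ + (1 - t) • μ) i = t * ∑ i, κ i + (1 - t) * ∑ i, μ i := by
    simp [Finset.sum_add_distrib, Finset.mul_sum]
  have s2 : ∑ i, (t • κ + (1 - t) • μ) i * (t • κ + (1 - t) • μ) i
      = t ^ 2 * ∑ i, κ i * κ i + 2 * t * (1 - t) * ∑ i, κ i * μ i
        + (1 - t) ^ 2 * ∑ i, μ i * μ i := by
    simp only [Finset.mul_sum, ← Finset.sum_add_distrib]
    refine Finset.sum_congr rfl fun i _ => ?_
    simp only [Pi.add_apply, Pi.smul_apply, smul_eq_mul]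
    ring
  rw [s1, s2] at em
  have hp : 0 ≤ ∑ i, κ i * κ i := Finset.sum_nonneg fun i _ => mul_self_nonneg _
  have hq : 0 ≤ ∑ i, μ i * μ i := Finset.sum_nonneg fun i _ => mul_self_nonneg _
  unfold sigma1 at hκ1 hμ1
  have hA := Real.sq_sqrt hκ2.le
  have hB := Real.sq_sqrt hμ2.le
  have hA0 := Real.sqrt_nonneg (sigma2 κ)
  have hB0 := Real.sqrt_nonneg (sigma2 μ)
  have hP := Real.sq_sqrt hp
  have hQ := Real.sq_sqrt hq
  have hP0 := Real.sqrt_nonneg (∑ i, κ i * κ i)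
  have hQ0 := Real.sqrt_nonneg (∑ i, μ i * μ i)
  generalize √(sigma2 κ) = A at *
  generalize √(sigma2 μ) = B at *
  generalize √(∑ i, κ i * κ i) = P at *
  generalize √(∑ i, μ i * μ i) = Q at *
  generalize ∑ i, κ i * κ i = p at *
  generalize ∑ i, μ i * μ i = q at *
  generalize ∑ i, κ i * μ i = r at *
  generalize ∑ i, κ i = a at *
  generalize ∑ i, μ i = b at *
  generalize sigma2 κ = k at *
  generalize sigma2 μ = m at *
  subst hA hB hP hQ
  have hr : r ≤ P * Q := abs_le_of_sq_le_sq' (by linarith [mul_pow P Q 2]) (by positivity) |>.2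
  have key : P * Q + 2 * (A * B) ≤ a * b := by
    refine (abs_le_of_sq_le_sq' ?_ (by positivity)).2
    rw [mul_pow a, eκ, eμ]
    nlinarith [sq_nonneg (P * B - Q * A)]
  apply Real.le_sqrt_of_sq_le
  have h1 : 0 ≤ t * (1 - t) := mul_nonneg ht0 (by linarith)
  have h2 := mul_nonneg h1 (show 0 ≤ a * b - r - 2 * (A * B) by linarith)
  linear_combination h2 + (1/2) * em - (1/2) * t ^ 2 * eκ - (1/2) * (1 - t) ^ 2 * eμ
end
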